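/- Two simple graphs g and h on [n] have equal additive SBM sufficient statistics (equal block degree sums Σ_{v∈B_i} deg(v) for every block B_i) if and only if g can be transformed into h by a finite sequence of moves, each of which is either (a) a single-edge swap replacing an edge {u,v} by an edge {y,w} with z(u)=z(y), z(v)=z(w), or (b) a 4-cycle exchange replacing edges {u,v},{y,w} by {u,y},{v,w} (which preserves all node degrees), such that every intermediate graph is simple. -/

import Mathlib

/-- Number of nodes assigned to block `i`. -/
noncomputable def blockSize {n k : ℕ} (z : Fin n → Fin k) (i : Fin k) : ℕ := {v | z v = i}.ncard

/-- Additive SBM sufficient statistic: total degree of the nodes in block `i`. -/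
noncomputable def addStat {n k : ℕ} (z : Fin n → Fin k) (g : SimpleGraph (Fin n)) (i : Fin k) : ℕ :=
  ∑ v ∈ Finset.univ.filter (fun v => z v = i), (g.neighborSet v).ncard

/-- A move for the additive SBM: either a single-edge swap within the same pair of blocks,
or a degree-preserving 4-cycle exchange. -/
def addStep {n k : ℕ} (z : Fin n → Fin k) (g h : SimpleGraph (Fin n)) : Prop :=
  (∃ u v y w : Fin n, g.Adj u v ∧ ¬ g.Adj y w ∧ y ≠ w ∧ z u = z y ∧ z v = z w ∧
    h = SimpleGraph.fromEdgeSet ((g.edgeSet \ {s(u, v)}) ∪ {s(y, w)})) ∨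
  (∃ u v y w : Fin n, [u, v, y, w].Pairwise (· ≠ ·) ∧
    g.Adj u v ∧ g.Adj y w ∧ ¬ g.Adj u y ∧ ¬ g.Adj v w ∧
    h = SimpleGraph.fromEdgeSet ((g.edgeSet \ {s(u, v), s(y, w)}) ∪ {s(u, y), s(v, w)}))

/-! Two graphs with equal statistics are brought together by moves on either side; this suffices
because moves are reversible. If the block degree sums agree but some degree does not, then some
block contains a vertex `p` with too many edges in `g` and a vertex `q` with too few. Comparing the
private neighbours of `p` and `q` in the two graphs yields `w` such that replacing `pw` by `qw` in
`g`, or `qw` by `pw` in `h`, is a block swap bringing the degrees closer. Once all degrees agree,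
take a path `x v y` with `vx` only in `g` and `vy` only in `h`. The same comparison for `y` and `x`
yields `w` such that exchanging `vx, yw` for `vy, xw` in `g`, or the reverse in `h`, enlarges the
set of common edges. -/

section ReflTransGen

variable {α γ : Type*} {r : α → α → Prop} {σ : α → γ} {μ : α → α → ℕ}

theorem eq_iff_reflTransGen_of_exists_closer (hr : ∀ a b, r a b → r b a)
    (hσ : ∀ a b, r a b → σ a = σ b) (hμ : ∀ a b, μ a b = μ b a)
    (closer : ∀ a b, σ a = σ b → ¬ Relation.ReflTransGen r a b →
      (∃ a', r a a' ∧ μ a' b < μ a b) ∨ ∃ b', r b b' ∧ μ b' a < μ b a) (a b : α) :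
    σ a = σ b ↔ Relation.ReflTransGen r a b := by
  refine ⟨fun hab => ?_, fun hab => ?_⟩
  · induction hN : μ a b using Nat.strong_induction_on generalizing a b with
    | _ N ih =>
      by_contra hnot
      rcases closer a b hab hnot with ⟨a', haa', hlt⟩ | ⟨b', hbb', hlt⟩
      · exact hnot (.head haa' (ih _ (hN ▸ hlt) a' b ((hσ a a' haa').symm.trans hab) rfl))
      · rw [hμ b' a, hμ b a, hN] at hlt
        exact hnot (.tail (ih _ hlt a b' (hab.trans (hσ b b' hbb')) rfl) (hr _ _ hbb'))
  · induction hab with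
    | refl => rfl
    | tail _ hbc ih => exact ih.trans (hσ _ _ hbc)

end ReflTransGen

section NCard

variable {α : Type*}

theorem ncard_singleton_inter (e : α) (S : Set α) [Decidable (e ∈ S)] :
    ({e} ∩ S).ncard = if e ∈ S then 1 else 0 := by
  split_ifs with h <;> simp [h]

theorem ncard_pair_inter {e f : α} (hef : e ≠ f) {S : Set α} [Decidable (e ∈ S)]
    [Decidable (f ∈ S)] :
    ({e, f} ∩ S).ncard = (if e ∈ S then 1 else 0) + if f ∈ S then 1 else 0 := by
  rw [Set.insert_eq, Set.union_inter_distrib_right, Set.ncard_union_eq, ncard_singleton_inter,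
    ncard_singleton_inter]
  exact (Set.disjoint_singleton.2 hef).mono Set.inter_subset_left Set.inter_subset_left

theorem ncard_compl_lt_ncard_compl [Finite α] {s t : Set α} (hst : s.ncard < t.ncard) :
    tᶜ.ncard < sᶜ.ncard := by
  have hs := Set.ncard_add_ncard_compl s
  have ht := Set.ncard_add_ncard_compl t
  omega

end NCard

variable {V β : Type*} {g h : SimpleGraph V} {A B : Set (Sym2 V)}

/-- The graph obtained from `g` by deleting the edges in `A` and inserting those in `B`: the common
form of the two kinds of moves. -/
def exchangeEdges (g : SimpleGraph V) (A B : Set (Sym2 V)) : SimpleGraph V :=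
  SimpleGraph.fromEdgeSet ((g.edgeSet \ A) ∪ B)

/-- The pairs in `A` are edges and those in `B` are non-edges of `g`, so that deleting `A` and
inserting `B` is a reversible operation staying within simple graphs. -/
structure Exchangeable (g : SimpleGraph V) (A B : Set (Sym2 V)) : Prop where
  subset_edgeSet : A ⊆ g.edgeSet
  subset_edgeSet_compl : B ⊆ gᶜ.edgeSet

namespace Exchangeable

theorem disjoint (hAB : Exchangeable g A B) : Disjoint g.edgeSet B :=
  (SimpleGraph.disjoint_edgeSet.2 disjoint_compl_right).mono_right hAB.subset_edgeSet_compl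

theorem edgeSet_exchangeEdges (hAB : Exchangeable g A B) :
    (exchangeEdges g A B).edgeSet = (g.edgeSet \ A) ∪ B := by
  rw [exchangeEdges, SimpleGraph.edgeSet_fromEdgeSet, sdiff_eq_left]
  refine Set.disjoint_union_left.2 ⟨?_, ?_⟩
  · exact Set.disjoint_right.2 fun _ hd he => g.not_isDiag_of_mem_edgeSet he.1 hd
  · exact Set.disjoint_right.2 fun _ hd he =>
      gᶜ.not_isDiag_of_mem_edgeSet (hAB.subset_edgeSet_compl he) hd

theorem symm (hAB : Exchangeable g A B) : Exchangeable (exchangeEdges g A B) B A where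
  subset_edgeSet := by
    rw [hAB.edgeSet_exchangeEdges]
    exact Set.subset_union_right
  subset_edgeSet_compl := by
    intro e heA
    have heg := hAB.subset_edgeSet heA
    have heB : e ∉ B := Set.disjoint_left.1 hAB.disjoint heg
    have he : e ∉ (exchangeEdges g A B).edgeSet := by
      simp [hAB.edgeSet_exchangeEdges, heA, heB]
    induction e with
    | _ u v => exact (SimpleGraph.compl_adj _ u v).2 ⟨SimpleGraph.Adj.ne heg, he⟩

theorem exchangeEdges_exchangeEdges (hAB : Exchangeable g A B) :
    exchangeEdges (exchangeEdges g A B) B A = g := by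
  apply SimpleGraph.edgeSet_injective
  rw [hAB.symm.edgeSet_exchangeEdges, hAB.edgeSet_exchangeEdges, Set.union_sdiff_right,
    (hAB.disjoint.mono_left Set.sdiff_subset).sdiff_eq_left,
    Set.sdiff_union_of_subset hAB.subset_edgeSet]

theorem ncard_edgeSet_inter [Finite V] (hAB : Exchangeable g A B) (S : Set (Sym2 V)) :
    ((exchangeEdges g A B).edgeSet ∩ S).ncard + (A ∩ S).ncard =
      (g.edgeSet ∩ S).ncard + (B ∩ S).ncard := by
  have hA : (g.edgeSet \ A ∩ S).ncard + (A ∩ S).ncard = (g.edgeSet ∩ S).ncard := by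
    rw [Set.inter_sdiff_distrib_right]
    exact Set.ncard_sdiff_add_ncard_of_subset
      (Set.inter_subset_inter_left S hAB.subset_edgeSet)
  have hB : Disjoint (g.edgeSet \ A ∩ S) (B ∩ S) :=
    hAB.disjoint.mono (Set.inter_subset_left.trans Set.sdiff_subset) Set.inter_subset_left
  rw [hAB.edgeSet_exchangeEdges, Set.union_inter_distrib_right, Set.ncard_union_eq hB, ← hA]
  ring

end Exchangeable

/-- The degree of `v` in `g`, as an `ncard` to avoid decidability assumptions on adjacency. -/
noncomputable abbrev deg (g : SimpleGraph V) (v : V) : ℕ := (g.neighborSet v).ncard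

theorem deg_eq_ncard_edgeSet_inter (g : SimpleGraph V) (a : V) :
    deg g a = (g.edgeSet ∩ {e | a ∈ e}).ncard := by
  classical exact (Set.ncard_congr' (g.incidenceSetEquivNeighborSet a)).symm

theorem Exchangeable.deg_exchangeEdges [Finite V] (hAB : Exchangeable g A B) (a : V) :
    deg (exchangeEdges g A B) a + (A ∩ {e | a ∈ e}).ncard = deg g a + (B ∩ {e | a ∈ e}).ncard := by
  simpa only [deg_eq_ncard_edgeSet_inter] using hAB.ncard_edgeSet_inter {e | a ∈ e}

theorem ite_mem_sym2Mk [DecidableEq V] {u v : V} (huv : u ≠ v) (a : V) [Decidable (a ∈ s(u, v))] :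
    (if a ∈ s(u, v) then 1 else 0) = (if a = u then 1 else 0) + if a = v then 1 else 0 := by
  grind

/-- The neighbours of `p` other than `q` that are not neighbours of `q`, i.e. the possible `w` for
replacing the edge `pw` by `qw`. -/
def privateNeighbors (g : SimpleGraph V) (p q : V) : Set V :=
  g.neighborSet p ∩ gᶜ.neighborSet q

open scoped Classical in
theorem deg_eq_ncard_privateNeighbors_add [Finite V] (g : SimpleGraph V) (p q : V) :
    deg g p = (privateNeighbors g p q).ncard + (g.commonNeighbors p q).ncard +
      if g.Adj p q then 1 else 0 := by
  have hunion : g.neighborSet p =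
      privateNeighbors g p q ∪ g.commonNeighbors p q ∪ ({q} ∩ g.neighborSet p) := by
    ext w
    simp only [privateNeighbors, SimpleGraph.commonNeighbors, SimpleGraph.compl_adj,
      SimpleGraph.mem_neighborSet, Set.mem_union, Set.mem_inter_iff, Set.mem_singleton_iff]
    grind
  have hdisj : Disjoint (privateNeighbors g p q) (g.commonNeighbors p q) :=
    Set.disjoint_left.2 fun _ hw hw' => hw.2.2 hw'.2
  have hdisj' : Disjoint (privateNeighbors g p q ∪ g.commonNeighbors p q)
      ({q} ∩ g.neighborSet p) := by
    rw [Set.disjoint_right]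
    rintro _ ⟨rfl, -⟩ (hq | hq)
    · exact hq.2.1 rfl
    · exact g.irrefl hq.2
  rw [deg, hunion, Set.ncard_union_eq hdisj', Set.ncard_union_eq hdisj, ncard_singleton_inter]
  rfl

theorem deg_add_ncard_privateNeighbors [Finite V] (g : SimpleGraph V) (p q : V) :
    deg g p + (privateNeighbors g q p).ncard = deg g q + (privateNeighbors g p q).ncard := by
  rw [deg_eq_ncard_privateNeighbors_add g p q, deg_eq_ncard_privateNeighbors_add g q p,
    g.commonNeighbors_symm q p, g.adj_comm q p]
  ring

theorem exists_mem_privateNeighbors_of_deg_lt [Finite V] {p q : V}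
    (hlt : deg h p + deg g q < deg g p + deg h q) :
    (∃ w ∈ privateNeighbors g p q, w ∉ privateNeighbors h p q) ∨
      ∃ w ∈ privateNeighbors h q p, w ∉ privateNeighbors g q p := by
  by_contra! hsub
  have hpq := Set.ncard_le_ncard (s := privateNeighbors g p q) hsub.1
  have hqp := Set.ncard_le_ncard (s := privateNeighbors h q p) hsub.2
  have hg := deg_add_ncard_privateNeighbors g p q
  have hh := deg_add_ncard_privateNeighbors h p q
  omega

theorem exists_mem_privateNeighbors_of_deg_le [Finite V] {p q v : V}
    (hle : deg h p + deg g q ≤ deg g p + deg h q) (hv : v ∈ privateNeighbors h p q)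
    (hv' : v ∉ privateNeighbors g p q) :
    (∃ w ∈ privateNeighbors g p q, w ∉ privateNeighbors h p q) ∨
      ∃ w ∈ privateNeighbors h q p, w ∉ privateNeighbors g q p := by
  by_contra! hsub
  have hpq := Set.ncard_lt_ncard (s := privateNeighbors g p q)
    (Set.ssubset_iff_exists.2 ⟨hsub.1, v, hv, hv'⟩)
  have hqp := Set.ncard_le_ncard (s := privateNeighbors h q p) hsub.2
  have hg := deg_add_ncard_privateNeighbors g p q
  have hh := deg_add_ncard_privateNeighbors h p q
  omega

/-- `h` arises from `g` by a 4-cycle exchange. The four vertices are automatically distinct. -/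
def IsTwoSwitch (g h : SimpleGraph V) : Prop :=
  ∃ u v y w : V, Exchangeable g {s(u, v), s(y, w)} {s(u, y), s(v, w)} ∧
    h = exchangeEdges g {s(u, v), s(y, w)} {s(u, y), s(v, w)}

theorem exchangeable_switch_iff {u v y w : V} :
    Exchangeable g {s(u, v), s(y, w)} {s(u, y), s(v, w)} ↔
      [u, v, y, w].Pairwise (· ≠ ·) ∧ g.Adj u v ∧ g.Adj y w ∧ ¬ g.Adj u y ∧ ¬ g.Adj v w := by
  constructor
  · rintro ⟨hA, hB⟩
    simp only [Set.pair_subset_iff, SimpleGraph.mem_edgeSet, SimpleGraph.compl_adj] at hA hB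
    have huw : u ≠ w := by
      rintro rfl
      exact hB.2.2 hA.1.symm
    have hvy : v ≠ y := by
      rintro rfl
      exact hB.1.2 hA.1
    simp [hA, hB, huw, hvy, hA.1.ne, hA.2.ne]
  · rintro ⟨hne, huv, hyw, huy, hvw⟩
    have huy' : u ≠ y := by grind
    have hvw' : v ≠ w := by grind
    exact ⟨by simp [Set.pair_subset_iff, huv, hyw],
      by simp [Set.pair_subset_iff, huy, hvw, huy', hvw']⟩

namespace IsTwoSwitch

theorem symm (hgh : IsTwoSwitch g h) : IsTwoSwitch h g := by
  obtain ⟨u, v, y, w, hAB, rfl⟩ := hgh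
  exact ⟨u, y, v, w, hAB.symm, hAB.exchangeEdges_exchangeEdges.symm⟩

theorem deg_eq [Finite V] (hgh : IsTwoSwitch g h) (a : V) : deg g a = deg h a := by
  classical
  obtain ⟨u, v, y, w, hAB, rfl⟩ := hgh
  obtain ⟨hne, -⟩ := exchangeable_switch_iff.1 hAB
  have huv : u ≠ v := by grind
  have hyw : y ≠ w := by grind
  have huy : u ≠ y := by grind
  have hvw : v ≠ w := by grind
  have hA : s(u, v) ≠ s(y, w) := by grind
  have hB : s(u, y) ≠ s(v, w) := by grind
  have hdeg := hAB.deg_exchangeEdges a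
  rw [ncard_pair_inter hA, ncard_pair_inter hB] at hdeg
  simp only [Set.mem_ofPred_eq, ite_mem_sym2Mk huv, ite_mem_sym2Mk hyw, ite_mem_sym2Mk huy,
    ite_mem_sym2Mk hvw] at hdeg
  omega

end IsTwoSwitch

theorem exists_adj_and_not_adj_of_deg_le [Finite V] {v : V} (hdeg : deg h v ≤ deg g v)
    (hne : g.neighborSet v ≠ h.neighborSet v) : ∃ x, g.Adj v x ∧ ¬ h.Adj v x := by
  by_contra! hsub
  exact hne (Set.eq_of_subset_of_ncard_le hsub hdeg)

theorem exists_isTwoSwitch_ncard_lt [Finite V] {v x y w : V} (hx : g.Adj v x) (hx' : ¬ h.Adj v x)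
    (hy : h.Adj v y) (hy' : ¬ g.Adj v y) (hw : w ∈ privateNeighbors g y x)
    (hw' : w ∉ privateNeighbors h y x) :
    ∃ g', IsTwoSwitch g g' ∧ (g.edgeSet ∩ h.edgeSet).ncard < (g'.edgeSet ∩ h.edgeSet).ncard := by
  classical
  have hAB : Exchangeable g {s(v, x), s(y, w)} {s(v, y), s(x, w)} :=
    ⟨Set.pair_subset hx hw.1, Set.pair_subset ⟨hy.ne, hy'⟩ hw.2⟩
  obtain ⟨hne, -⟩ := exchangeable_switch_iff.1 hAB
  have hA : s(v, x) ≠ s(y, w) := by grind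
  have hB : s(v, y) ≠ s(x, w) := by grind
  have hyx : h.Adj y w → h.Adj x w := fun hyw => by
    by_contra hxw
    exact hw' ⟨hyw, hw.2.1, hxw⟩
  refine ⟨_, ⟨v, x, y, w, hAB, rfl⟩, ?_⟩
  have hcard := hAB.ncard_edgeSet_inter h.edgeSet
  rw [ncard_pair_inter hA, ncard_pair_inter hB] at hcard
  simp only [SimpleGraph.mem_edgeSet, hx', hy, if_true, if_false] at hcard
  split_ifs at hcard <;> first | omega | tauto

theorem exists_isTwoSwitch_of_deg_eq [Finite V] (hdeg : ∀ a, deg g a = deg h a) (hne : g ≠ h) :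
    (∃ g', IsTwoSwitch g g' ∧ (g.edgeSet ∩ h.edgeSet).ncard < (g'.edgeSet ∩ h.edgeSet).ncard) ∨
      ∃ h', IsTwoSwitch h h' ∧
        (h.edgeSet ∩ g.edgeSet).ncard < (h'.edgeSet ∩ g.edgeSet).ncard := by
  obtain ⟨v, hv⟩ : ∃ v, g.neighborSet v ≠ h.neighborSet v := by
    by_contra! heq
    exact hne (SimpleGraph.ext (funext heq))
  obtain ⟨x, hx, hx'⟩ := exists_adj_and_not_adj_of_deg_le (hdeg v).ge hv
  obtain ⟨y, hy, hy'⟩ := exists_adj_and_not_adj_of_deg_le (hdeg v).le hv.symm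
  have hvh : v ∈ privateNeighbors h y x := ⟨hy.symm, hx.ne', fun hxv => hx' hxv.symm⟩
  have hvg : v ∉ privateNeighbors g y x := fun hmem => hy' hmem.1.symm
  have hle : deg h y + deg g x ≤ deg g y + deg h x := by rw [hdeg x, hdeg y]
  rcases exists_mem_privateNeighbors_of_deg_le hle hvh hvg with ⟨w, hw, hw'⟩ | ⟨w, hw, hw'⟩
  · exact .inl (exists_isTwoSwitch_ncard_lt hx hx' hy hy' hw hw')
  · exact .inr (exists_isTwoSwitch_ncard_lt hy hy' hx hx' hw hw')

theorem deg_eq_iff_reflTransGen_isTwoSwitch [Finite V] (g h : SimpleGraph V) :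
    deg g = deg h ↔ Relation.ReflTransGen IsTwoSwitch g h := by
  refine eq_iff_reflTransGen_of_exists_closer (μ := fun a b => (a.edgeSet ∩ b.edgeSet)ᶜ.ncard)
    (fun _ _ => .symm) (fun _ _ hab => funext hab.deg_eq)
    (fun a b => by rw [Set.inter_comm]) (fun a b hdeg hnot => ?_) g h
  have hne : a ≠ b := fun hab => hnot (hab ▸ .refl)
  exact (exists_isTwoSwitch_of_deg_eq (congrFun hdeg) hne).imp
    (.imp fun _ => .imp_right ncard_compl_lt_ncard_compl)
    (.imp fun _ => .imp_right ncard_compl_lt_ncard_compl)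

/-- `h` arises from `g` by replacing an edge by a non-edge between the same pair of blocks of the
block assignment `z`. -/
def IsBlockSwap (z : V → β) (g h : SimpleGraph V) : Prop :=
  ∃ u v y w : V, Exchangeable g {s(u, v)} {s(y, w)} ∧ z u = z y ∧ z v = z w ∧
    h = exchangeEdges g {s(u, v)} {s(y, w)}

theorem exchangeable_singleton_iff {u v y w : V} :
    Exchangeable g {s(u, v)} {s(y, w)} ↔ g.Adj u v ∧ gᶜ.Adj y w :=
  ⟨fun hAB => ⟨hAB.1 rfl, hAB.2 rfl⟩,
    fun hAB => ⟨Set.singleton_subset_iff.2 hAB.1, Set.singleton_subset_iff.2 hAB.2⟩⟩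

theorem Exchangeable.deg_exchangeEdges_singleton [Finite V] [DecidableEq V] {u v y w : V}
    (hAB : Exchangeable g {s(u, v)} {s(y, w)}) (a : V) :
    deg (exchangeEdges g {s(u, v)} {s(y, w)}) a +
        ((if a = u then 1 else 0) + if a = v then 1 else 0) =
      deg g a + ((if a = y then 1 else 0) + if a = w then 1 else 0) := by
  obtain ⟨huv, hyw⟩ := exchangeable_singleton_iff.1 hAB
  rw [← ite_mem_sym2Mk huv.ne, ← ite_mem_sym2Mk hyw.ne]
  simpa only [ncard_singleton_inter, Set.mem_ofPred_eq] using hAB.deg_exchangeEdges a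

/-- The total degree in `g` of the vertices in block `i` of the block assignment `z`. -/
noncomputable def blockDegree [Fintype V] [DecidableEq β] (z : V → β) (g : SimpleGraph V)
    (i : β) : ℕ :=
  ∑ v with z v = i, deg g v

namespace IsBlockSwap

variable {z : V → β}

theorem symm (hgh : IsBlockSwap z g h) : IsBlockSwap z h g := by
  obtain ⟨u, v, y, w, hAB, huy, hvw, rfl⟩ := hgh
  exact ⟨y, w, u, v, hAB.symm, huy.symm, hvw.symm, hAB.exchangeEdges_exchangeEdges.symm⟩

theorem blockDegree_eq [Fintype V] [DecidableEq β] (hgh : IsBlockSwap z g h) (i : β) :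
    blockDegree z g i = blockDegree z h i := by
  classical
  obtain ⟨u, v, y, w, hAB, huy, hvw, rfl⟩ := hgh
  have hsum := Finset.sum_congr (rfl : ({a | z a = i} : Finset V) = _)
    fun a _ => hAB.deg_exchangeEdges_singleton a
  simp only [Finset.sum_add_distrib, Finset.sum_ite_eq', Finset.mem_filter, Finset.mem_univ,
    true_and, huy, hvw] at hsum
  exact (Nat.add_right_cancel hsum).symm

end IsBlockSwap

theorem exists_deg_lt_of_blockDegree_eq [Fintype V] [DecidableEq β] {z : V → β} {c : V}
    (hz : blockDegree z g (z c) = blockDegree z h (z c)) (hc : deg g c ≠ deg h c) :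
    ∃ p, z p = z c ∧ deg h p < deg g p := by
  by_contra! hle
  have hle' : ∀ a ∈ ({a | z a = z c} : Finset V), deg g a ≤ deg h a := by simpa using hle
  exact hc ((Finset.sum_eq_sum_iff_of_le hle').1 hz c (by simp))

theorem exists_isBlockSwap_sum_dist_lt [Fintype V] {z : V → β} {p q w : V} (hz : z p = z q)
    (hp : deg h p < deg g p) (hq : deg g q < deg h q) (hw : w ∈ privateNeighbors g p q) :
    ∃ g', IsBlockSwap z g g' ∧
      ∑ a, Nat.dist (deg g' a) (deg h a) < ∑ a, Nat.dist (deg g a) (deg h a) := by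
  classical
  have hAB : Exchangeable g {s(p, w)} {s(q, w)} := exchangeable_singleton_iff.2 hw
  have hpq : p ≠ q := by
    rintro rfl
    omega
  have hdeg (a : V) : deg (exchangeEdges g {s(p, w)} {s(q, w)}) a + (if a = p then 1 else 0) =
      deg g a + if a = q then 1 else 0 := by
    have := hAB.deg_exchangeEdges_singleton a
    omega
  refine ⟨_, ⟨p, w, q, w, hAB, hz, rfl, rfl⟩,
    Finset.sum_lt_sum (fun a _ => ?_) ⟨p, Finset.mem_univ p, ?_⟩⟩
  · have ha := hdeg a
    unfold Nat.dist
    split_ifs at ha with hap haq haq <;> subst_vars <;> omega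
  · have hp' := hdeg p
    rw [if_pos rfl, if_neg hpq] at hp'
    unfold Nat.dist
    omega

/-- A single move: a swap of one edge between the same pair of blocks, or a 4-cycle exchange. -/
def IsBlockMove (z : V → β) (g h : SimpleGraph V) : Prop :=
  IsBlockSwap z g h ∨ IsTwoSwitch g h

namespace IsBlockMove

variable {z : V → β}

theorem symm (hgh : IsBlockMove z g h) : IsBlockMove z h g :=
  hgh.imp IsBlockSwap.symm IsTwoSwitch.symm

theorem blockDegree_eq [Fintype V] [DecidableEq β] (hgh : IsBlockMove z g h) (i : β) :
    blockDegree z g i = blockDegree z h i := by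
  rcases hgh with hswap | hswitch
  · exact hswap.blockDegree_eq i
  · exact Finset.sum_congr rfl fun a _ => hswitch.deg_eq a

end IsBlockMove

theorem exists_isBlockMove_of_blockDegree_eq [Fintype V] [DecidableEq β] {z : V → β}
    (hz : blockDegree z g = blockDegree z h) (hne : deg g ≠ deg h) :
    (∃ g', IsBlockMove z g g' ∧
        ∑ a, Nat.dist (deg g' a) (deg h a) < ∑ a, Nat.dist (deg g a) (deg h a)) ∨
      ∃ h', IsBlockMove z h h' ∧
        ∑ a, Nat.dist (deg h' a) (deg g a) < ∑ a, Nat.dist (deg h a) (deg g a) := by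
  obtain ⟨c, hc⟩ := Function.ne_iff.1 hne
  obtain ⟨p, hzp, hp⟩ := exists_deg_lt_of_blockDegree_eq (congrFun hz (z c)) hc
  obtain ⟨q, hzq, hq⟩ := exists_deg_lt_of_blockDegree_eq (congrFun hz.symm (z c)) hc.symm
  have hpq : z p = z q := hzp.trans hzq.symm
  rcases exists_mem_privateNeighbors_of_deg_lt (add_lt_add hp hq) with ⟨w, hw, -⟩ | ⟨w, hw, -⟩
  · exact .inl ((exists_isBlockSwap_sum_dist_lt hpq hp hq hw).imp fun _ => .imp_left .inl)
  · exact .inr ((exists_isBlockSwap_sum_dist_lt hpq.symm hq hp hw).imp fun _ => .imp_left .inl)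

theorem stmt9_general [Fintype V] [DecidableEq β] (z : V → β) (g h : SimpleGraph V) :
    (∀ i, blockDegree z g i = blockDegree z h i) ↔
      Relation.ReflTransGen (IsBlockMove z) g h := by
  rw [← funext_iff]
  refine eq_iff_reflTransGen_of_exists_closer
    (μ := fun a b => ∑ v, Nat.dist (deg a v) (deg b v)) (fun _ _ => .symm)
    (fun _ _ hab => funext hab.blockDegree_eq) (fun a b => by simp only [Nat.dist_comm])
    (fun a b hab hnot => ?_) g h
  refine exists_isBlockMove_of_blockDegree_eq hab fun hdeg => hnot ?_
  exact Relation.ReflTransGen.mono (fun _ _ => Or.inr) _ _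
    ((deg_eq_iff_reflTransGen_isTwoSwitch a b).1 hdeg)

theorem addStep_iff_isBlockMove {n k : ℕ} {z : Fin n → Fin k} {g h : SimpleGraph (Fin n)} :
    addStep z g h ↔ IsBlockMove z g h := by
  simp only [addStep, IsBlockMove, IsBlockSwap, IsTwoSwitch, exchangeable_singleton_iff,
    exchangeable_switch_iff, exchangeEdges, SimpleGraph.compl_adj]
  grind

theorem stmt9 {n k : ℕ} (z : Fin n → Fin k) (g h : SimpleGraph (Fin n)) :
    (∀ i, addStat z g i = addStat z h i) ↔ Relation.ReflTransGen (addStep z) g h := by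
  have hstep : addStep z = IsBlockMove z :=
    funext₂ fun _ _ => propext addStep_iff_isBlockMove
  rw [hstep]
  exact stmt9_general z g h
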